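/- Let G be a countable group acting measurably on a measurable space X equipped with a probability measure μ, such that the action of each g ∈ G is quasi-measure-preserving (the pushforward of μ by x ↦ g•x is absolutely continuous with respect to μ, and conversely). Assume the diagonal action of G on X × X is ergodic, i.e. every measurable subset s ⊆ X × X with (g•x, g•x') ∈ s ⟺ (x,x') ∈ s for all g ∈ G is null or conull for μ × μ. Let E be a separable real Banach space equipped with an action of G by linear isometries, and let f : X → E be a measurable map which is G-equivariant: for each g ∈ G, f(g•x) = g•f(x) for μ-almost every x. Then there exists c ∈ E with g•c = c for all g ∈ G and f(x) = c for μ-almost every x. -/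

import Mathlib

/-!
For every `r > 0` the set of pairs `(x, y)` with `f x` and `f y` at distance less than `r` is
invariant, up to null sets, under the diagonal action, because `f` is equivariant and the group acts
by isometries on the target. By separability some ball of radius `r / 2` has non-null preimage `A`,
and the set contains `A × A`, so ergodicity makes it conull. Letting `r` tend to `0` along a
sequence gives `f x = f y` for almost every pair, so `f` is almost everywhere equal to a constant,
and equivariance at one generic point shows that the group fixes this constant.
-/

open MeasureTheory

open Filter Function Set

section InvariantSets

theorem preimage_smul_iInter_preimage_smul {G Y : Type*} [Group G] [MulAction G Y]
    (s : Set Y) (g : G) :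
    (g • ·) ⁻¹' (⋂ h : G, (h • ·) ⁻¹' s) = ⋂ h : G, (h • ·) ⁻¹' s := by
  simp only [preimage_iInter, preimage_preimage, smul_smul]
  exact (mul_right_surjective g).iInter_comp fun h : G ↦ (h • ·) ⁻¹' s

variable (G : Type*) {Y : Type*} [MeasurableSpace Y]

/-- Ergodicity of an action of `G` on a measure space: a measurable invariant set is null or conull.
Unlike in `ErgodicSMul`, the measure need not be invariant, and only strictly invariant sets are
tested; for countable groups, `IsErgodicAction.eventuallyConst` covers almost invariant sets. -/
def IsErgodicAction [SMul G Y] (ν : Measure Y) : Prop :=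
  ∀ s : Set Y, MeasurableSet s → (∀ g : G, (g • ·) ⁻¹' s = s) → EventuallyConst s (ae ν)

variable {G} {ν : Measure Y} {s : Set Y}

theorem IsErgodicAction.eventuallyConst [Group G] [Countable G] [MulAction G Y]
    [MeasurableConstSMul G Y] (hν : IsErgodicAction G ν) (hsm : MeasurableSet s)
    (hs : ∀ g : G, (g • ·) ⁻¹' s =ᵐ[ν] s) : EventuallyConst s (ae ν) := by
  have h_inter : (⋂ g : G, (g • ·) ⁻¹' s : Set Y) =ᵐ[ν] s := by
    simpa only [iInter_const] using Filter.EventuallyEq.countable_iInter hs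
  have h_meas : MeasurableSet (⋂ g : G, (g • ·) ⁻¹' s : Set Y) :=
    .iInter fun g ↦ measurable_const_smul g hsm
  exact (hν _ h_meas (preimage_smul_iInter_preimage_smul s)).congr h_inter

theorem IsErgodicAction.ae_mem [Group G] [Countable G] [MulAction G Y]
    [MeasurableConstSMul G Y] (hν : IsErgodicAction G ν) (hsm : MeasurableSet s)
    (hs : ∀ g : G, (g • ·) ⁻¹' s =ᵐ[ν] s) (hpos : 0 < ν s) : ∀ᵐ y ∂ν, y ∈ s :=
  (eventuallyConst_set.1 (hν.eventuallyConst hsm hs)).resolve_right fun h ↦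
    hpos.ne' (measure_eq_zero_iff_ae_notMem.2 h)

instance instMeasurableConstSMulProd {M α β : Type*} [MeasurableSpace α] [MeasurableSpace β]
    [SMul M α] [SMul M β] [MeasurableConstSMul M α] [MeasurableConstSMul M β] :
    MeasurableConstSMul M (α × β) where
  measurable_const_smul c := (measurable_const_smul c).prodMap (measurable_const_smul c)

end InvariantSets

section AlmostEverywhere

variable {X E : Type*} [MeasurableSpace X] {μ : Measure X}

theorem ae_eq_of_forall_ae_edist_lt [EMetricSpace E] {u v : X → E}
    (h : ∀ r > 0, ∀ᵐ x ∂μ, edist (u x) (v x) < r) : u =ᵐ[μ] v := by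
  have h_inv : ∀ᵐ x ∂μ, ∀ n : ℕ, edist (u x) (v x) < (n : ENNReal)⁻¹ :=
    ae_all_iff.2 fun n ↦ h _ (ENNReal.inv_pos.2 (ENNReal.natCast_ne_top n))
  filter_upwards [h_inv] with x hx
  by_contra hne
  obtain ⟨n, hn⟩ := ENNReal.exists_inv_nat_lt (edist_pos.2 hne).ne'
  exact lt_asymm hn (hx n)

theorem exists_ae_eq_const_of_ae_prod [NeZero μ] [SFinite μ] {f : X → E}
    (h : ∀ᵐ p ∂μ.prod μ, f p.1 = f p.2) : ∃ c, f =ᵐ[μ] const X c := by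
  obtain ⟨x, hx⟩ := (Measure.ae_ae_of_ae_prod h).exists
  exact ⟨f x, hx.mono fun y hy ↦ hy.symm⟩

theorem isFixedPt_of_ae_eq_const [NeZero μ] {T : X → X} (hT : Measure.QuasiMeasurePreserving T μ μ)
    {S : E → E} {f : X → E} (hf : f ∘ T =ᵐ[μ] S ∘ f) {c : E} (hc : f =ᵐ[μ] const X c) :
    IsFixedPt S c := by
  obtain ⟨x, hx, hTx, hfx⟩ := (hc.and ((hT.ae_eq_comp hc).and hf)).exists
  calc
    S c = S (f x) := by rw [hx, const_apply]
    _ = f (T x) := hfx.symm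
    _ = c := hTx

theorem measure_prod_setOf_edist_lt_pos [NeZero μ] [SFinite μ] [PseudoEMetricSpace E]
    [HereditarilyLindelofSpace E] [MeasurableSpace E] [OpensMeasurableSpace E] {f : X → E}
    (hf : AEMeasurable f μ) {r : ENNReal} (hr : 0 < r) :
    0 < μ.prod μ {p | edist (f p.1) (f p.2) < r} := by
  have hmap : μ.map f ≠ 0 := (Measure.map_ne_zero_iff hf).2 (NeZero.ne μ)
  obtain ⟨c, hc⟩ := Measure.nonempty_support hmap
  let B := Metric.eball c (r / 2)
  have hB : 0 < μ (f ⁻¹' B) := by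
    rw [← Measure.map_apply_of_aemeasurable hf Metric.isOpen_eball.measurableSet]
    exact (Measure.mem_support_iff_forall c).1 hc B
      (Metric.eball_mem_nhds c (ENNReal.half_pos hr.ne'))
  have h_subset : (f ⁻¹' B) ×ˢ (f ⁻¹' B) ⊆ {p | edist (f p.1) (f p.2) < r} := by
    rintro ⟨x, y⟩ ⟨hx, hy⟩
    calc
      edist (f x) (f y) ≤ edist (f x) c + edist (f y) c := edist_triangle_right _ _ _
      _ < r / 2 + r / 2 := ENNReal.add_lt_add hx hy
      _ = r := ENNReal.add_halves r
  calc
    0 < μ (f ⁻¹' B) * μ (f ⁻¹' B) := ENNReal.mul_pos hB.ne' hB.ne'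
    _ = μ.prod μ ((f ⁻¹' B) ×ˢ (f ⁻¹' B)) := (Measure.prod_prod _ _).symm
    _ ≤ μ.prod μ {p | edist (f p.1) (f p.2) < r} := measure_mono h_subset

theorem preimage_setOf_edist_lt_ae_eq [PseudoEMetricSpace E] {T : X → X} {S : E → E}
    (hS : Isometry S) {f : X → E} (hf : f ∘ T =ᵐ[μ] S ∘ f) (r : ENNReal) :
    Prod.map T T ⁻¹' {p | edist (f p.1) (f p.2) < r} =ᵐ[μ.prod μ]
      {p : X × X | edist (f p.1) (f p.2) < r} := by
  refine eventuallyEq_set.2 ?_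
  filter_upwards [Measure.quasiMeasurePreserving_fst.ae hf,
    Measure.quasiMeasurePreserving_snd.ae hf] with p (h₁ : f (T p.1) = S (f p.1))
    (h₂ : f (T p.2) = S (f p.2))
  simp only [mem_preimage, mem_ofPred_eq, Prod.map_fst, Prod.map_snd, h₁, h₂, hS.edist_eq]

end AlmostEverywhere

section EquivariantMaps

variable {G X E : Type*} [Group G] [Countable G] [MeasurableSpace X] [MulAction G X]
  [MeasurableConstSMul G X] {μ : Measure X} [NeZero μ] [SFinite μ] [EMetricSpace E]
  [SecondCountableTopology E] [MeasurableSpace E] [OpensMeasurableSpace E] {ρ : G → E → E}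
  {f : X → E}

theorem IsErgodicAction.ae_prod_eq_of_equivariant (herg : IsErgodicAction G (μ.prod μ))
    (hρ : ∀ g, Isometry (ρ g)) (hf : Measurable f)
    (hequiv : ∀ g, f ∘ (g • ·) =ᵐ[μ] ρ g ∘ f) : ∀ᵐ p ∂μ.prod μ, f p.1 = f p.2 := by
  refine ae_eq_of_forall_ae_edist_lt fun r hr ↦ herg.ae_mem ?_
    (fun g ↦ preimage_setOf_edist_lt_ae_eq (hρ g) (hequiv g) r)
    (measure_prod_setOf_edist_lt_pos hf.aemeasurable hr)
  exact measurableSet_lt ((hf.comp measurable_fst).edist (hf.comp measurable_snd))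
    measurable_const

theorem equivariant_map_essentially_constant_general (hqmp : ∀ g : G, μ.map (g • ·) ≪ μ)
    (herg : IsErgodicAction G (μ.prod μ)) (hρ : ∀ g, Isometry (ρ g)) (hf : Measurable f)
    (hequiv : ∀ g, f ∘ (g • ·) =ᵐ[μ] ρ g ∘ f) :
    ∃ c, (∀ g, IsFixedPt (ρ g) c) ∧ f =ᵐ[μ] const X c := by
  obtain ⟨c, hc⟩ := exists_ae_eq_const_of_ae_prod (herg.ae_prod_eq_of_equivariant hρ hf hequiv)
  exact ⟨c, fun g ↦ isFixedPt_of_ae_eq_const ⟨measurable_const_smul g, hqmp g⟩ (hequiv g) hc, hc⟩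

end EquivariantMaps

/-- Ergodicity with coefficients: if a countable group `G` acts
measurably and quasi-measure-preservingly on a probability space `(X,μ)` with the
diagonal action on `X × X` ergodic, then every `G`-equivariant measurable map from `X`
to a separable Banach `G`-module `E` is essentially constant, equal to a `G`-fixed
vector. -/
theorem equivariant_map_essentially_constant
    {G : Type*} [Group G] [Countable G]
    {X : Type*} [MeasurableSpace X] (μ : Measure X) [IsProbabilityMeasure μ]
    [MulAction G X]
    (hmeas : ∀ g : G, Measurable fun x : X => g • x)
    (hqmp : ∀ g : G, Measure.map (fun x : X => g • x) μ ≪ μ ∧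
      μ ≪ Measure.map (fun x : X => g • x) μ)
    (herg : ∀ s : Set (X × X), MeasurableSet s →
      (∀ (g : G) (x x' : X), (g • x, g • x') ∈ s ↔ (x, x') ∈ s) →
      (μ.prod μ) s = 0 ∨ (μ.prod μ) sᶜ = 0)
    {E : Type*} [NormedAddCommGroup E] [NormedSpace ℝ E] [CompleteSpace E]
    [TopologicalSpace.SeparableSpace E] [MeasurableSpace E] [BorelSpace E]
    (π : G →* (E ≃ₗᵢ[ℝ] E))
    (f : X → E) (hf : Measurable f)
    (hequiv : ∀ g : G, ∀ᵐ x ∂μ, f (g • x) = π g (f x)) :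
    ∃ c : E, (∀ g : G, π g c = c) ∧ ∀ᵐ x ∂μ, f x = c := by
  have : SecondCountableTopology E := UniformSpace.secondCountable_of_separable E
  have : MeasurableConstSMul G X := ⟨hmeas⟩
  have herg' : IsErgodicAction G (μ.prod μ) := fun s hs hinv ↦
    eventuallyConst_set'.2 <| (herg s hs fun g x x' ↦ Set.ext_iff.1 (hinv g) (x, x')).imp
      ae_eq_empty.2 ae_eq_univ.2
  exact equivariant_map_essentially_constant_general (fun g ↦ (hqmp g).1) herg'
    (fun g ↦ (π g).isometry) hf hequiv
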